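/- If the eigenvalues a_1 > a_2 > ⋯ > a_d of A are all distinct and λ_i := lim_{p→∞} λ_i(p) satisfies λ_i = a_i b_i for all i = 1,…,d, then lim_{p→∞} (A^{p/2} B^p A^{p/2})^{1/p} = V diag(a_1 b_1, a_2 b_2, …, a_d b_d) V*. -/

import Mathlib

open Matrix Filter Topology Finset
open scoped ComplexOrder

/-- Functional-calculus power of a (Hermitian, in practice positive semidefinite)
matrix, with the convention `0 ^ r = 0` for `r > 0`. -/
noncomputable def psdPow {d : ℕ} (A : Matrix (Fin d) (Fin d) ℂ) (r : ℝ) :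
    Matrix (Fin d) (Fin d) ℂ :=
  if hA : A.IsHermitian then
    (hA.eigenvectorUnitary : Matrix (Fin d) (Fin d) ℂ) *
      Matrix.diagonal (fun i => ((hA.eigenvalues i ^ r : ℝ) : ℂ)) *
      star (hA.eigenvectorUnitary : Matrix (Fin d) (Fin d) ℂ)
  else 0

/-- The eigenvalues of a Hermitian matrix, sorted in decreasing order
(with multiplicities). -/
noncomputable def eigsDesc {d : ℕ} (A : Matrix (Fin d) (Fin d) ℂ) : Fin d → ℝ :=
  if hA : A.IsHermitian then
    fun i => hA.eigenvalues (Tuple.sort hA.eigenvalues i.rev)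
  else 0

/-- `Zmat A B p = (A^{p/2} B^p A^{p/2})^{1/p}`. -/
noncomputable def Zmat {d : ℕ} (A B : Matrix (Fin d) (Fin d) ℂ) (p : ℝ) :
    Matrix (Fin d) (Fin d) ℂ :=
  psdPow (psdPow A (p / 2) * psdPow B p * psdPow A (p / 2)) (1 / p)


lemma det_mul_sum_fun {m n : Type*} [Fintype m] [DecidableEq m] [Fintype n] [DecidableEq n]
    (M : Matrix m n ℂ) (N : Matrix n m ℂ) :
    (M * N).det = ∑ f : m → n, (∏ i, M i (f i)) * (N.submatrix f id).det := by
  have h1 : (M * N) = fun i => ∑ j, M i j • N j := by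
    ext i j
    simp [Matrix.mul_apply]
  have h2 := (Matrix.detRowAlternating (R := ℂ) (n := m)).toMultilinearMap.map_sum
    (fun i j => M i j • N j)
  have h3 : (M * N).det = (Matrix.detRowAlternating (R := ℂ) (n := m)).toMultilinearMap
      (fun i => ∑ j, M i j • N j) := by
    rw [h1]; rfl
  rw [h3, h2]
  refine Finset.sum_congr rfl fun f _ => ?_
  rw [MultilinearMap.map_smul_univ]
  rfl

lemma cauchy_binet_fun {m n : Type*} [Fintype m] [DecidableEq m] [Fintype n] [DecidableEq n]
    (M : Matrix m n ℂ) (N : Matrix n m ℂ) :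
    ((Fintype.card m).factorial : ℂ) * (M * N).det =
      ∑ f : m → n, (M.submatrix id f).det * (N.submatrix f id).det := by
  have h1 : ∀ s : Equiv.Perm m, (M * N).det =
      ∑ f : m → n, ((Equiv.Perm.sign s : ℤ) : ℂ) * (∏ i, M i (f (s i))) *
        (N.submatrix f id).det := by
    intro s
    rw [det_mul_sum_fun, ← Equiv.sum_comp (Equiv.arrowCongr s (Equiv.refl n)).symm]
    refine Finset.sum_congr rfl fun f _ => ?_
    have : N.submatrix (f ∘ s) id = (N.submatrix f id).submatrix s id := rfl
    have e : (Equiv.arrowCongr s (Equiv.refl n)).symm f = f ∘ s := by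
      ext; simp
    rw [e, this, Matrix.det_permute]
    simp only [Function.comp]
    ring
  have h2 : ∑ s : Equiv.Perm m, (M * N).det = ((Fintype.card m).factorial : ℂ) * (M * N).det := by
    rw [Finset.sum_const, Finset.card_univ, Fintype.card_perm, nsmul_eq_mul]
  rw [← h2, Finset.sum_congr rfl (fun s _ => h1 s), Finset.sum_comm]
  refine Finset.sum_congr rfl fun f _ => ?_
  rw [← Finset.sum_mul, ← Matrix.det_transpose (M.submatrix id f)]
  congr 1
  rw [Matrix.det_apply']
  rfl

lemma sum_normSq_det {m n : Type*} [Fintype m] [DecidableEq m] [Fintype n] [DecidableEq n]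
    (N : Matrix n m ℂ) :
    ((∑ f : m → n, ‖(N.submatrix f id).det‖ ^ 2 : ℝ) : ℂ) =
      ((Fintype.card m).factorial : ℂ) * (Nᴴ * N).det := by
  rw [cauchy_binet_fun]
  push_cast
  refine Finset.sum_congr rfl fun f _ => ?_
  rw [← Matrix.conjTranspose_submatrix, Matrix.det_conjTranspose, ← Complex.conj_mul']
  rfl

lemma prod_le_prod_first {k d : ℕ} (hk : k ≤ d) (β : Fin d → ℝ) (hβ : Antitone β)
    (h0 : ∀ i, 0 ≤ β i) (f : Fin k → Fin d) (hf : Function.Injective f) :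
    ∏ i, β (f i) ≤ ∏ i : Fin k, β (Fin.castLE hk i) := by
  have hc : (Finset.univ.image f).card = k := by
    rw [Finset.card_image_of_injective _ hf]; simp
  set g := (Finset.univ.image f).orderEmbOfFin hc with hg
  have h1 : ∏ i, β (f i) = ∏ i, β (g i) := by
    rw [← Finset.prod_image (s := Finset.univ) (g := f) (f := β) (fun x _ y _ h => hf h),
      ← Finset.prod_image (s := Finset.univ) (g := g) (f := β) (fun x _ y _ h => g.injective h)]
    congr 1
    rw [hg, Finset.image_orderEmbOfFin_univ]
  rw [h1]
  refine Finset.prod_le_prod (fun i _ => h0 _) fun i _ => hβ ?_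
  have : StrictMono (fun i : Fin k => (g i : ℕ)) := fun x y h => g.strictMono h
  rw [Fin.le_def]
  have h3 : ∀ n (hn : n < k), n ≤ (g ⟨n, hn⟩ : ℕ) := by
    intro n
    induction n with
    | zero => intro _; exact Nat.zero_le _
    | succ n ih =>
      intro hn
      have := ih (by omega)
      have h4 : g ⟨n, by omega⟩ < g ⟨n+1, hn⟩ := g.strictMono (by simp [Fin.lt_def])
      rw [Fin.lt_def] at h4
      omega
  exact h3 i i.2

lemma prod_lt_prod_first {m d : ℕ} (hk : m + 1 ≤ d) (β : Fin d → ℝ) (hβ : StrictAnti β)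
    (h0 : ∀ i, 0 ≤ β i) (hpos : 0 < β ⟨m, hk⟩) (f : Fin (m+1) → Fin d)
    (hf : Function.Injective f) (l : Fin (m+1)) (hl : m < (f l : ℕ)) :
    ∏ i, β (f i) < ∏ i : Fin (m+1), β (Fin.castLE hk i) := by
  rw [Fin.prod_univ_succAbove _ l, Fin.prod_univ_castSucc, mul_comm]
  have h1 := prod_le_prod_first (k := m) (by omega) β hβ.antitone h0 (f ∘ l.succAbove)
    (hf.comp Fin.succAbove_right_injective)
  have h2 : β (f l) < β ⟨m, hk⟩ := hβ (by simpa [Fin.lt_def] using hl)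
  have h3 : 0 < ∏ i : Fin m, β (Fin.castLE (by omega : m ≤ d) i) :=
    Finset.prod_pos fun i _ => hpos.trans_le (hβ.antitone (by simp [Fin.le_def]))
  calc _ ≤ (∏ i : Fin m, β (Fin.castLE (by omega : m ≤ d) i)) * β (f l) :=
        mul_le_mul_of_nonneg_right h1 (h0 _)
    _ < (∏ i : Fin m, β (Fin.castLE (by omega : m ≤ d) i)) * β ⟨m, hk⟩ :=
        mul_lt_mul_of_pos_left h2 h3
    _ = _ := rfl

lemma diag_fun_unique {d : ℕ} (Q P : Matrix (Fin d) (Fin d) ℂ)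
    (hQ : Q ∈ Matrix.unitaryGroup (Fin d) ℂ) (hP : P ∈ Matrix.unitaryGroup (Fin d) ℂ)
    (μ ν : Fin d → ℝ)
    (h : Q * Matrix.diagonal (fun i => (μ i : ℂ)) * Qᴴ =
      P * Matrix.diagonal (fun i => (ν i : ℂ)) * Pᴴ) (g : ℝ → ℝ) :
    Q * Matrix.diagonal (fun i => (g (μ i) : ℂ)) * Qᴴ =
      P * Matrix.diagonal (fun i => (g (ν i) : ℂ)) * Pᴴ := by
  have hQ1 : Qᴴ * Q = 1 := Matrix.mem_unitaryGroup_iff'.mp hQ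
  have hQ2 : Q * Qᴴ = 1 := Matrix.mem_unitaryGroup_iff.mp hQ
  have hP1 : Pᴴ * P = 1 := Matrix.mem_unitaryGroup_iff'.mp hP
  have hP2 : P * Pᴴ = 1 := Matrix.mem_unitaryGroup_iff.mp hP
  have h1 : (Pᴴ * Q) * Matrix.diagonal (fun i => (μ i : ℂ)) =
      Matrix.diagonal (fun i => (ν i : ℂ)) * (Pᴴ * Q) := by
    calc _ = Pᴴ * (Q * Matrix.diagonal (fun i => (μ i : ℂ)) * (Qᴴ * Q)) := by
            rw [hQ1]; simp [Matrix.mul_assoc]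
      _ = Pᴴ * (Q * Matrix.diagonal (fun i => (μ i : ℂ)) * Qᴴ) * Q := by
            simp only [Matrix.mul_assoc]
      _ = (Pᴴ * P) * Matrix.diagonal (fun i => (ν i : ℂ)) * (Pᴴ * Q) := by
            rw [h]; simp only [Matrix.mul_assoc]
      _ = _ := by rw [hP1, Matrix.one_mul]
  have h2 : (Pᴴ * Q) * Matrix.diagonal (fun i => (g (μ i) : ℂ)) =
      Matrix.diagonal (fun i => (g (ν i) : ℂ)) * (Pᴴ * Q) := by
    ext i j
    have h3 := congrFun (congrFun h1 i) j
    rw [Matrix.mul_diagonal, Matrix.diagonal_mul] at h3 ⊢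
    by_cases hz : (Pᴴ * Q) i j = 0
    · simp [hz]
    · have : (μ j : ℂ) = ν i := by
        rw [mul_comm] at h3; exact mul_right_cancel₀ hz h3
      have : μ j = ν i := by exact_mod_cast this
      rw [this, mul_comm]
  calc _ = (P * Pᴴ) * Q * Matrix.diagonal (fun i => (g (μ i) : ℂ)) * Qᴴ := by
          rw [hP2, Matrix.one_mul]
    _ = P * ((Pᴴ * Q) * Matrix.diagonal (fun i => (g (μ i) : ℂ))) * Qᴴ := by
          simp only [Matrix.mul_assoc]
    _ = P * Matrix.diagonal (fun i => (g (ν i) : ℂ)) * Pᴴ * (Q * Qᴴ) := by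
          rw [h2]; simp only [Matrix.mul_assoc]
    _ = _ := by rw [hQ2, Matrix.mul_one]

lemma diag_isHermitian {d : ℕ} (Q : Matrix (Fin d) (Fin d) ℂ) (μ : Fin d → ℝ) :
    (Q * Matrix.diagonal (fun i => (μ i : ℂ)) * Qᴴ).IsHermitian := by
  refine Matrix.isHermitian_mul_mul_conjTranspose _ ?_
  refine Matrix.isHermitian_diagonal_of_self_adjoint _ ?_
  ext i; simp

lemma herm_spec {d : ℕ} (X : Matrix (Fin d) (Fin d) ℂ) (h : X.IsHermitian) :
    X = (h.eigenvectorUnitary : Matrix (Fin d) (Fin d) ℂ) *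
      Matrix.diagonal (fun i => (h.eigenvalues i : ℂ)) *
      (h.eigenvectorUnitary : Matrix (Fin d) (Fin d) ℂ)ᴴ := by
  have := h.spectral_theorem
  rw [Unitary.conjStarAlgAut_apply] at this
  exact this

lemma psdPow_eq {d : ℕ} (Q : Matrix (Fin d) (Fin d) ℂ) (hQ : Q ∈ Matrix.unitaryGroup (Fin d) ℂ)
    (μ : Fin d → ℝ) (r : ℝ) :
    psdPow (Q * Matrix.diagonal (fun i => (μ i : ℂ)) * Qᴴ) r =
      Q * Matrix.diagonal (fun i => ((μ i ^ r : ℝ) : ℂ)) * Qᴴ := by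
  have hH := diag_isHermitian Q μ
  unfold psdPow
  rw [dif_pos hH]
  exact diag_fun_unique _ _ hH.eigenvectorUnitary.2 hQ _ _ (herm_spec _ hH).symm (fun x => x ^ r)

/-- Diagonalization with decreasing eigenvalues. -/
lemma eigsDesc_spec {d : ℕ} (X : Matrix (Fin d) (Fin d) ℂ) (h : X.IsHermitian) :
    ∃ Q ∈ Matrix.unitaryGroup (Fin d) ℂ,
      X = Q * Matrix.diagonal (fun i => (eigsDesc X i : ℂ)) * Qᴴ := by
  let e : Equiv.Perm (Fin d) := Fin.revPerm.trans (Tuple.sort h.eigenvalues)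
  have he : eigsDesc X = h.eigenvalues ∘ e := by
    unfold eigsDesc; rw [dif_pos h]; rfl
  refine ⟨(h.eigenvectorUnitary : Matrix (Fin d) (Fin d) ℂ).submatrix id e, ?_, ?_⟩
  · rw [Matrix.mem_unitaryGroup_iff, star_eq_conjTranspose, Matrix.conjTranspose_submatrix,
      Matrix.submatrix_mul_equiv]
    have := Matrix.mem_unitaryGroup_iff.mp h.eigenvectorUnitary.2
    rw [star_eq_conjTranspose] at this
    rw [this]; simp
  · have h1 : Matrix.diagonal (fun i => (eigsDesc X i : ℂ)) =
        (Matrix.diagonal (fun i => (h.eigenvalues i : ℂ))).submatrix e e := by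
      rw [Matrix.submatrix_diagonal_equiv, he]; rfl
    rw [h1, Matrix.conjTranspose_submatrix, Matrix.submatrix_mul_equiv,
      Matrix.submatrix_mul_equiv]
    simpa using herm_spec X h

lemma sum_normSq_det_cols {d k : ℕ} (X : Matrix (Fin d) (Fin d) ℂ) (σ : Fin d → ℝ)
    (hX : Xᴴ * X = Matrix.diagonal (fun i => ((σ i ^ 2 : ℝ) : ℂ)))
    (g : Fin k → Fin d) (hg : Function.Injective g) :
    ∑ f : Fin k → Fin d, ‖(X.submatrix f g).det‖ ^ 2 = (k.factorial : ℝ) * (∏ i, σ (g i)) ^ 2 := by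
  have h := sum_normSq_det (X.submatrix id g)
  have h1 : (X.submatrix id g)ᴴ * X.submatrix id g =
      Matrix.diagonal (fun i => ((σ (g i) ^ 2 : ℝ) : ℂ)) := by
    have : (X.submatrix id g)ᴴ * X.submatrix id g = (Xᴴ * X).submatrix g g := by
      ext i j; simp [Matrix.mul_apply]
    rw [this, hX]
    rw [Matrix.submatrix_diagonal _ _ hg]; rfl
  rw [h1, Matrix.det_diagonal, Fintype.card_fin] at h
  rw [← Finset.prod_pow]
  exact_mod_cast h

lemma key_ineq {d k : ℕ} (hk : k ≤ d) (U Q : Matrix (Fin d) (Fin d) ℂ)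
    (hU : U ∈ Matrix.unitaryGroup (Fin d) ℂ) (hQ : Q ∈ Matrix.unitaryGroup (Fin d) ℂ)
    (α β σ : Fin d → ℝ) (hβ : Antitone β) (α0 : ∀ i, 0 ≤ α i) (β0 : ∀ i, 0 ≤ β i)
    (σ0 : ∀ i, 0 ≤ σ i)
    (h : Matrix.diagonal (fun i => (α i : ℂ)) *
        (U * Matrix.diagonal (fun i => ((β i ^ 2 : ℝ) : ℂ)) * Uᴴ) *
        Matrix.diagonal (fun i => (α i : ℂ)) =
      Q * Matrix.diagonal (fun i => ((σ i ^ 2 : ℝ) : ℂ)) * Qᴴ)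
    (J : Fin k → Fin d) (hJ : Function.Injective J) :
    ‖(Q.submatrix J (Fin.castLE hk)).det‖ * ∏ i : Fin k, σ (Fin.castLE hk i) ≤
      (∏ i, α (J i)) * ∏ i : Fin k, β (Fin.castLE hk i) := by
  have hQ1 : Qᴴ * Q = 1 := Matrix.mem_unitaryGroup_iff'.mp hQ
  have hU2 : U * Uᴴ = 1 := Matrix.mem_unitaryGroup_iff.mp hU
  set DA := Matrix.diagonal (fun i => (α i : ℂ)) with hDA
  set DB := Matrix.diagonal (fun i => (β i : ℂ)) with hDB
  set DS := Matrix.diagonal (fun i => ((σ i ^ 2 : ℝ) : ℂ)) with hDS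
  have hAH : DAᴴ = DA := by
    rw [hDA, Matrix.diagonal_conjTranspose]; congr 1; ext i; simp
  have hBH : DBᴴ = DB := by
    rw [hDB, Matrix.diagonal_conjTranspose]; congr 1; ext i; simp
  have hBB : Matrix.diagonal (fun i => ((β i ^ 2 : ℝ) : ℂ)) = DB * DB := by
    rw [hDB, Matrix.diagonal_mul_diagonal]; congr 1; ext i; push_cast; ring
  rw [hBB] at h
  set X := DB * Uᴴ * DA * Q with hX
  have hfull : DA * (U * DB * X) = Q * DS := by
    calc _ = DA * (U * (DB * DB) * Uᴴ) * DA * Q := by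
          rw [hX]; simp only [Matrix.mul_assoc]
      _ = Q * DS * (Qᴴ * Q) := by rw [h]; simp only [Matrix.mul_assoc]
      _ = _ := by rw [hQ1, Matrix.mul_one]
  have hXX : Xᴴ * X = DS := by
    calc _ = Qᴴ * (DA * (U * DB * X)) := by
          rw [hX]; simp only [Matrix.conjTranspose_mul, hAH, hBH,
            Matrix.conjTranspose_conjTranspose, Matrix.mul_assoc]
      _ = Qᴴ * Q * DS := by rw [hfull]; simp only [Matrix.mul_assoc]
      _ = DS := by rw [hQ1, Matrix.one_mul]
  set c := Fin.castLE hk with hc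
  have hcinj : Function.Injective c := Fin.castLE_injective hk
  have e1 : ((Q * DS).submatrix J c).det =
      (Q.submatrix J c).det * ((∏ i, σ (c i)) ^ 2 : ℝ) := by
    have : (Q * DS).submatrix J c =
        Q.submatrix J c * Matrix.diagonal (fun i => ((σ (c i) ^ 2 : ℝ) : ℂ)) := by
      ext i j; simp [hDS, Matrix.mul_diagonal]
    rw [this, Matrix.det_mul, Matrix.det_diagonal, ← Finset.prod_pow]
    push_cast; rfl
  have e2 : ((DA * (U * DB * X)).submatrix J c).det =
      ((∏ i, α (J i) : ℝ) : ℂ) * ((U.submatrix J id * (DB * X).submatrix id c).det) := by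
    have : (DA * (U * DB * X)).submatrix J c =
        Matrix.diagonal (fun i => (α (J i) : ℂ)) * (U.submatrix J id * (DB * X).submatrix id c) := by
      ext i j
      rw [Matrix.diagonal_mul, Matrix.submatrix_apply, hDA, Matrix.diagonal_mul, Matrix.mul_assoc]
      rfl
    rw [this, Matrix.det_mul, Matrix.det_diagonal]
    push_cast; rfl
  have e3 : ‖(U.submatrix J id * (DB * X).submatrix id c).det‖ ≤
      (∏ i, β (c i)) * ∏ i, σ (c i) := by
    have hcb := cauchy_binet_fun (U.submatrix J id) ((DB * X).submatrix id c)
    rw [Fintype.card_fin] at hcb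
    have hfac : (0 : ℝ) < k.factorial := by exact_mod_cast Nat.factorial_pos k
    have hn : (k.factorial : ℝ) * ‖(U.submatrix J id * (DB * X).submatrix id c).det‖ ≤
        ∑ f : Fin k → Fin d, (∏ i, β (c i)) *
          (‖(U.submatrix J f).det‖ * ‖(X.submatrix f c).det‖) := by
      have : (k.factorial : ℝ) * ‖(U.submatrix J id * (DB * X).submatrix id c).det‖ =
        ‖(k.factorial : ℂ) * (U.submatrix J id * (DB * X).submatrix id c).det‖ := by
        rw [norm_mul]; simp
      rw [this, hcb]
      refine (norm_sum_le _ _).trans (Finset.sum_le_sum fun f _ => ?_)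
      rw [norm_mul]
      have h1 : ((DB * X).submatrix id c).submatrix f id =
          Matrix.diagonal (fun i => (β (f i) : ℂ)) * X.submatrix f c := by
        ext i j; simp [hDB, Matrix.diagonal_mul]
      rw [h1, Matrix.det_mul, Matrix.det_diagonal, norm_mul]
      have h2 : ‖∏ i, (β (f i) : ℂ)‖ = ∏ i, β (f i) := by
        rw [norm_prod]
        exact Finset.prod_congr rfl fun i _ => by simp [abs_of_nonneg (β0 _)]
      rw [h2]
      change ‖(U.submatrix J f).det‖ * _ ≤ _
      by_cases hf : Function.Injective f
      · have := prod_le_prod_first hk β hβ β0 f hf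
        have h3 : 0 ≤ ‖(U.submatrix J f).det‖ * ‖(X.submatrix f c).det‖ := by positivity
        nlinarith [mul_le_mul_of_nonneg_right this h3]
      · have : (X.submatrix f c).det = 0 := by
          simp only [Function.Injective, not_forall] at hf
          obtain ⟨x, y, hxy, hne⟩ := hf
          exact Matrix.det_zero_of_row_eq hne (by ext j; simp [hxy])
        simp [this]
    have s1 := sum_normSq_det_cols X σ hXX c hcinj
    have s2 : ∑ f : Fin k → Fin d, ‖(U.submatrix J f).det‖ ^ 2 = (k.factorial : ℝ) := by
      have := sum_normSq_det_cols Uᴴ (fun _ => 1) (by simp [hU2]) J hJ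
      simp only [Finset.prod_const_one, one_pow, mul_one] at this
      rw [← this]
      refine Finset.sum_congr rfl fun f _ => ?_
      rw [← Matrix.conjTranspose_submatrix, Matrix.det_conjTranspose, norm_star]
    have cs := Finset.sum_mul_sq_le_sq_mul_sq Finset.univ
      (fun f : Fin k → Fin d => ‖(U.submatrix J f).det‖) (fun f => ‖(X.submatrix f c).det‖)
    rw [s1, s2] at cs
    have σp : 0 ≤ ∏ i, σ (c i) := Finset.prod_nonneg fun i _ => σ0 _
    have βp : 0 ≤ ∏ i, β (c i) := Finset.prod_nonneg fun i _ => β0 _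
    have cs2 : ∑ f : Fin k → Fin d, ‖(U.submatrix J f).det‖ * ‖(X.submatrix f c).det‖ ≤
        k.factorial * ∏ i, σ (c i) := by
      refine abs_le_of_sq_le_sq' ?_ (by positivity) |>.2
      calc _ ≤ _ := cs
        _ = _ := by ring
    rw [← Finset.mul_sum] at hn
    have := hn.trans (mul_le_mul_of_nonneg_left cs2 βp)
    refine le_of_mul_le_mul_left ?_ hfac
    calc _ ≤ _ := this
      _ = _ := by ring
  have σp : 0 ≤ ∏ i, σ (c i) := Finset.prod_nonneg fun i _ => σ0 _
  have βp : 0 ≤ ∏ i, β (c i) := Finset.prod_nonneg fun i _ => β0 _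
  have αp : 0 ≤ ∏ i, α (J i) := Finset.prod_nonneg fun i _ => α0 _
  rcases σp.eq_or_lt with hz | hp
  · rw [← hz, mul_zero]; positivity
  have e4 := congrArg norm (e1.symm.trans ((congrArg (fun M => (M.submatrix J c).det) hfull).symm.trans e2))
  rw [norm_mul, norm_mul, Complex.norm_of_nonneg (by positivity), Complex.norm_of_nonneg αp] at e4
  refine le_of_mul_le_mul_right ?_ hp
  calc _ = ‖(Q.submatrix J c).det‖ * (∏ i, σ (c i)) ^ 2 := by ring
    _ = _ := e4
    _ ≤ (∏ i, α (J i)) * ((∏ i, β (c i)) * ∏ i, σ (c i)) := mul_le_mul_of_nonneg_left e3 αp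
    _ = _ := by ring

lemma setup_at {d : ℕ} (V W : Matrix (Fin d) (Fin d) ℂ) (a b : Fin d → ℝ)
    (hV : V ∈ Matrix.unitaryGroup (Fin d) ℂ)
    (hW : W ∈ Matrix.unitaryGroup (Fin d) ℂ)
    (ha0 : ∀ i, 0 ≤ a i) (hb0 : ∀ i, 0 ≤ b i) (Z : Matrix (Fin d) (Fin d) ℂ) (p : ℝ) (hp : 0 < p)
    (hZ : Z = Zmat (V * Matrix.diagonal (fun i => (a i : ℂ)) * Vᴴ)
      (W * Matrix.diagonal (fun i => (b i : ℂ)) * Wᴴ) p) :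
    ∃ Q ∈ Matrix.unitaryGroup (Fin d) ℂ, (∀ i, 0 ≤ eigsDesc Z i) ∧
      Z = V * (Q * Matrix.diagonal (fun i => (eigsDesc Z i : ℂ)) * Qᴴ) * Vᴴ ∧
      Matrix.diagonal (fun i => ((a i ^ (p / 2) : ℝ) : ℂ)) *
        ((Vᴴ * W) * Matrix.diagonal (fun i => (((b i ^ (p / 2)) ^ 2 : ℝ) : ℂ)) * (Vᴴ * W)ᴴ) *
        Matrix.diagonal (fun i => ((a i ^ (p / 2) : ℝ) : ℂ)) =
      Q * Matrix.diagonal (fun i => (((eigsDesc Z i ^ (p / 2)) ^ 2 : ℝ) : ℂ)) * Qᴴ := by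
  have hV1 : Vᴴ * V = 1 := Matrix.mem_unitaryGroup_iff'.mp hV
  have hV2 : V * Vᴴ = 1 := Matrix.mem_unitaryGroup_iff.mp hV
  unfold Zmat at hZ
  rw [psdPow_eq V hV, psdPow_eq W hW] at hZ
  set DA := Matrix.diagonal (fun i => ((a i ^ (p / 2) : ℝ) : ℂ)) with hDA
  set DB := Matrix.diagonal (fun i => ((b i ^ p : ℝ) : ℂ)) with hDB
  set Y := V * DA * Vᴴ * (W * DB * Wᴴ) * (V * DA * Vᴴ) with hY
  have hsq : ∀ x : ℝ, 0 ≤ x → (x ^ (p / 2)) ^ 2 = x ^ p := by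
    intro x hx
    rw [← Real.rpow_natCast, ← Real.rpow_mul hx]; congr 1; push_cast; ring
  have hAH : (V * DA * Vᴴ)ᴴ = V * DA * Vᴴ := diag_isHermitian V (fun i => a i ^ (p / 2))
  have hYpsd : Y.PosSemidef := by
    have h1 : DB.PosSemidef := by
      rw [hDB, Matrix.posSemidef_diagonal_iff]
      intro i
      exact_mod_cast Real.rpow_nonneg (hb0 i) p
    have h2 := (h1.mul_mul_conjTranspose_same W).mul_mul_conjTranspose_same (V * DA * Vᴴ)
    rw [hAH] at h2
    exact h2
  have hYH := hYpsd.1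
  set P := (hYH.eigenvectorUnitary : Matrix (Fin d) (Fin d) ℂ) with hP
  have hPu : P ∈ Matrix.unitaryGroup (Fin d) ℂ := hYH.eigenvectorUnitary.2
  have hYspec : Y = P * Matrix.diagonal (fun i => (hYH.eigenvalues i : ℂ)) * Pᴴ := herm_spec Y hYH
  have hη : ∀ i, 0 ≤ hYH.eigenvalues i := fun i => hYpsd.eigenvalues_nonneg i
  have hZ2 : Z = P * Matrix.diagonal
      (fun i => ((hYH.eigenvalues i ^ (1 / p) : ℝ) : ℂ)) * Pᴴ := by
    rw [hZ]
    conv_lhs => rw [hYspec]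
    exact psdPow_eq P hPu _ _
  have hZpsd : Z.PosSemidef := by
    rw [hZ2]
    refine Matrix.PosSemidef.mul_mul_conjTranspose_same ?_ P
    rw [Matrix.posSemidef_diagonal_iff]
    intro i
    exact_mod_cast Real.rpow_nonneg (hη i) _
  obtain ⟨R, hR, hRs⟩ := eigsDesc_spec Z hZpsd.1
  have hlam0 : ∀ i, 0 ≤ eigsDesc Z i := by
    intro i
    unfold eigsDesc
    rw [dif_pos hZpsd.1]
    exact hZpsd.eigenvalues_nonneg _
  have hYR : Y = R * Matrix.diagonal (fun i => ((eigsDesc Z i ^ p : ℝ) : ℂ)) * Rᴴ := by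
    have := diag_fun_unique R P hR hPu _ _ (hRs.symm.trans hZ2) (fun x => x ^ p)
    rw [this]
    refine hYspec.trans ?_
    congr 3
    ext i
    rw [← Real.rpow_mul (hη i), one_div_mul_cancel hp.ne', Real.rpow_one]
  refine ⟨Vᴴ * R, mul_mem (Unitary.star_mem hV) hR, hlam0, ?_, ?_⟩
  · conv_lhs => rw [hRs]
    calc _ = (V * Vᴴ) * R * Matrix.diagonal (fun i => (eigsDesc Z i : ℂ)) * Rᴴ * (V * Vᴴ) := by
          rw [hV2, Matrix.one_mul, Matrix.mul_one]
      _ = _ := by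
          simp only [Matrix.conjTranspose_mul, Matrix.conjTranspose_conjTranspose,
            Matrix.mul_assoc]
  · simp only [hsq _ (hb0 _), hsq _ (hlam0 _)]
    calc _ = Vᴴ * V * DA * Vᴴ * (W * DB * Wᴴ) * V * DA * (Vᴴ * V) := by
          rw [hV1, Matrix.one_mul, Matrix.mul_one]
          simp only [Matrix.conjTranspose_mul, Matrix.conjTranspose_conjTranspose,
            Matrix.mul_assoc, hDB]
      _ = Vᴴ * Y * V := by
          rw [hY]; simp only [Matrix.mul_assoc]
      _ = _ := by
          rw [hYR]
          simp only [Matrix.conjTranspose_mul, Matrix.conjTranspose_conjTranspose,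
            Matrix.mul_assoc]

lemma det_tendsto_zero {d m : ℕ} (hk : m + 1 ≤ d) (U : Matrix (Fin d) (Fin d) ℂ)
    (hU : U ∈ Matrix.unitaryGroup (Fin d) ℂ) (Q : ℝ → Matrix (Fin d) (Fin d) ℂ)
    (hQ : ∀ p, Q p ∈ Matrix.unitaryGroup (Fin d) ℂ)
    (a b : Fin d → ℝ) (ha : StrictAnti a) (hb : Antitone b)
    (ha0 : ∀ i, 0 ≤ a i) (hb0 : ∀ i, 0 ≤ b i) (L : ℝ → Fin d → ℝ)
    (hL0 : ∀ p, 0 < p → ∀ i, 0 ≤ L p i)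
    (hL : ∀ i, Tendsto (fun p => L p i) atTop (𝓝 (a i * b i)))
    (h : ∀ p, 0 < p → Matrix.diagonal (fun i => ((a i ^ (p / 2) : ℝ) : ℂ)) *
        (U * Matrix.diagonal (fun i => (((b i ^ (p / 2)) ^ 2 : ℝ) : ℂ)) * Uᴴ) *
        Matrix.diagonal (fun i => ((a i ^ (p / 2) : ℝ) : ℂ)) =
      Q p * Matrix.diagonal (fun i => (((L p i ^ (p / 2)) ^ 2 : ℝ) : ℂ)) * (Q p)ᴴ)
    (hpos : 0 < a ⟨m, hk⟩ * b ⟨m, hk⟩)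
    (J : Fin (m+1) → Fin d) (hJ : Function.Injective J) (l : Fin (m+1)) (hl : m < (J l : ℕ)) :
    Tendsto (fun p => ‖((Q p).submatrix J (Fin.castLE hk)).det‖) atTop (𝓝 0) := by
  set c := Fin.castLE hk with hc
  have hapos : 0 < a ⟨m, hk⟩ := pos_of_mul_pos_left hpos (hb0 _)
  have hbpos : 0 < b ⟨m, hk⟩ := pos_of_mul_pos_right hpos (ha0 _)
  have hle : ∀ i : Fin (m+1), c i ≤ ⟨m, hk⟩ := fun i => by
    rw [Fin.le_def]; exact Nat.lt_succ_iff.mp i.2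
  have hac : ∀ i, 0 < a (c i) := fun i => hapos.trans_le (ha.antitone (hle i))
  have hbc : ∀ i, 0 < b (c i) := fun i => hbpos.trans_le (hb (hle i))
  have hlt := prod_lt_prod_first hk a ha ha0 hapos J hJ l hl
  have hAp : 0 < ∏ i, a (c i) := Finset.prod_pos fun i _ => hac i
  have hBp : 0 < ∏ i, b (c i) := Finset.prod_pos fun i _ => hbc i
  have hJp : 0 ≤ ∏ i, a (J i) := Finset.prod_nonneg fun i _ => ha0 _
  have hprod : Tendsto (fun p => ∏ i, L p (c i)) atTop (𝓝 ((∏ i, a (c i)) * ∏ i, b (c i))) := by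
    rw [← Finset.prod_mul_distrib]
    exact tendsto_finsetProd _ fun i _ => hL (c i)
  have hratio : Tendsto (fun p => ((∏ i, a (J i)) * ∏ i, b (c i)) / ∏ i, L p (c i)) atTop
      (𝓝 (((∏ i, a (J i)) * ∏ i, b (c i)) / ((∏ i, a (c i)) * ∏ i, b (c i)))) :=
    tendsto_const_nhds.div hprod (by positivity)
  have hr1 : ((∏ i, a (J i)) * ∏ i, b (c i)) / ((∏ i, a (c i)) * ∏ i, b (c i)) < 1 := by
    rw [div_lt_one (by positivity)]
    exact mul_lt_mul_of_pos_right hlt hBp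
  have hr0 : 0 ≤ ((∏ i, a (J i)) * ∏ i, b (c i)) / ((∏ i, a (c i)) * ∏ i, b (c i)) := by
    positivity
  obtain ⟨q, hq1, hq2⟩ := exists_between hr1
  have hq0 : 0 < q := hr0.trans_lt hq1
  have hlim : Tendsto (fun p : ℝ => q ^ (p / 2)) atTop (𝓝 0) :=
    (tendsto_rpow_atTop_of_base_lt_one q (by linarith) hq2).comp
      (tendsto_id.atTop_div_const (by norm_num : (0:ℝ) < 2))
  refine tendsto_of_tendsto_of_tendsto_of_le_of_le' tendsto_const_nhds hlim
    (Eventually.of_forall fun p => norm_nonneg _) ?_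
  have hev := hprod.eventually (lt_mem_nhds (by positivity : 0 < (∏ i, a (c i)) * ∏ i, b (c i)))
  filter_upwards [hratio.eventually (gt_mem_nhds hq1), hev, eventually_gt_atTop 0] with p h1 h2 h3
  have hp2 : 0 ≤ p / 2 := by positivity
  have hk1 := key_ineq hk U (Q p) hU (hQ p) (fun i => a i ^ (p/2)) (fun i => b i ^ (p/2))
    (fun i => L p i ^ (p/2)) (fun i j hij => Real.rpow_le_rpow (hb0 _) (hb hij) hp2)
    (fun i => Real.rpow_nonneg (ha0 i) _) (fun i => Real.rpow_nonneg (hb0 i) _)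
    (fun i => Real.rpow_nonneg (hL0 p h3 i) _) (h p h3) J hJ
  rw [Real.finsetProd_rpow _ _ (fun i _ => hL0 p h3 _), Real.finsetProd_rpow _ _ (fun i _ => ha0 _),
    Real.finsetProd_rpow _ _ (fun i _ => hb0 _), ← Real.mul_rpow hJp hBp.le] at hk1
  have hLp : 0 < (∏ i, L p (c i)) ^ (p / 2) := Real.rpow_pos_of_pos h2 _
  calc _ ≤ ((∏ i, a (J i)) * ∏ i, b (c i)) ^ (p / 2) / (∏ i, L p (c i)) ^ (p / 2) := by
        rw [le_div_iff₀ hLp]; exact hk1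
    _ = (((∏ i, a (J i)) * ∏ i, b (c i)) / ∏ i, L p (c i)) ^ (p / 2) := by
        rw [Real.div_rpow (by positivity) h2.le]
    _ ≤ q ^ (p / 2) := Real.rpow_le_rpow (by positivity) h1.le hp2

lemma lower_tendsto_zero {d m : ℕ} (hk : m + 1 ≤ d) (Q : ℝ → Matrix (Fin d) (Fin d) ℂ)
    (hQ : ∀ p, Q p ∈ Matrix.unitaryGroup (Fin d) ℂ)
    (h : ∀ J : Fin (m+1) → Fin d, Function.Injective J → ∀ l, m < (J l : ℕ) →
      Tendsto (fun p => ‖((Q p).submatrix J (Fin.castLE hk)).det‖) atTop (𝓝 0))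
    (j i : Fin d) (hj : m < (j : ℕ)) (hi : (i : ℕ) ≤ m) :
    Tendsto (fun p => ‖Q p j i‖) atTop (𝓝 0) := by
  set c := Fin.castLE hk with hc
  have hcinj : Function.Injective c := Fin.castLE_injective hk
  have hb : ∀ p x y, ‖Q p x y‖ ≤ 1 := fun p x y => entry_norm_bound_of_unitary (hQ p) x y
  have hcv : ∀ x, (c x : ℕ) ≤ m := fun x => Nat.lt_succ_iff.mp x.2
  -- Cramer
  have hcr : Tendsto (fun p => ‖Q p j i‖ * ‖((Q p).submatrix c c).det‖) atTop (𝓝 0) := by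
    have hid : ∀ p, ‖Q p j i‖ * ‖((Q p).submatrix c c).det‖ ≤
        ∑ l, ‖((Q p).submatrix (Function.update c l j) c).det‖ := by
      intro p
      have h1 := Matrix.mulVec_cramer ((Q p).submatrix c c)ᵀ (fun x => Q p j (c x))
      have h2 := congrFun h1 ⟨i, by omega⟩
      rw [Matrix.det_transpose] at h2
      have h3 : ∀ l, Matrix.cramer ((Q p).submatrix c c)ᵀ (fun x => Q p j (c x)) l =
          ((Q p).submatrix (Function.update c l j) c).det := by
        intro l
        rw [Matrix.cramer_apply, Matrix.updateCol_transpose, Matrix.det_transpose]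
        congr 1
        ext x y
        by_cases hx : x = l
        · subst hx; simp
        · simp [hx, Matrix.updateRow_ne]
      have h4 : Q p j i * ((Q p).submatrix c c).det =
          ∑ l, Q p (c l) i * ((Q p).submatrix (Function.update c l j) c).det := by
        rw [mul_comm]
        simp only [Matrix.mulVec, dotProduct, h3, Pi.smul_apply, smul_eq_mul] at h2
        exact h2.symm
      rw [← norm_mul, h4]
      refine (norm_sum_le _ _).trans (Finset.sum_le_sum fun l _ => ?_)
      rw [norm_mul]
      exact mul_le_of_le_one_left (norm_nonneg _) (hb _ _ _)
    have hs : Tendsto (fun p => ∑ l, ‖((Q p).submatrix (Function.update c l j) c).det‖)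
        atTop (𝓝 0) := by
      rw [← Finset.sum_const_zero (s := (Finset.univ : Finset (Fin (m+1))))]
      refine tendsto_finsetSum _ fun l _ => h _ ?_ l (by simpa using hj)
      intro x y hxy
      have hne : ∀ z, c z ≠ j := fun z hz => by have := hcv z; rw [hz] at this; omega
      by_cases hx : x = l <;> by_cases hy : y = l
      · rw [hx, hy]
      · subst hx; simp [hy] at hxy; exact absurd hxy.symm (hne _)
      · subst hy; simp [hx] at hxy; exact absurd hxy (hne _)
      · simp [hx, hy] at hxy; exact hcinj hxy
    exact squeeze_zero (fun p => by positivity) hid hs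
  have hsum : ∀ p, ∑ J : Fin (m+1) → Fin d, ‖((Q p).submatrix J c).det‖ ^ 2 =
      ((m+1).factorial : ℝ) := by
    intro p
    have hQ1 : (Q p)ᴴ * Q p = 1 := Matrix.mem_unitaryGroup_iff'.mp (hQ p)
    simpa using sum_normSq_det_cols (Q p) (fun _ => 1) (by simp [hQ1]) c hcinj
  have hfin : Tendsto (fun p => ‖Q p j i‖ ^ 2 * ((m+1).factorial : ℝ)) atTop (𝓝 0) := by
    have e : ∀ p, ‖Q p j i‖ ^ 2 * ((m+1).factorial : ℝ) =
        ∑ J : Fin (m+1) → Fin d, ‖Q p j i‖ ^ 2 * ‖((Q p).submatrix J c).det‖ ^ 2 := by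
      intro p
      rw [← hsum p, Finset.mul_sum]
    rw [funext e]
    rw [← Finset.sum_const_zero (s := (Finset.univ : Finset (Fin (m+1) → Fin d)))]
    refine tendsto_finsetSum _ fun J _ => ?_
    by_cases hJ : Function.Injective J
    · by_cases hl : ∃ l, m < (J l : ℕ)
      · obtain ⟨l, hl⟩ := hl
        have := (h J hJ l hl).pow 2
        simp only [ne_eq, OfNat.ofNat_ne_zero, not_false_eq_true, zero_pow] at this
        refine squeeze_zero (fun p => by positivity) (fun p => ?_) this
        exact mul_le_of_le_one_left (by positivity) (pow_le_one₀ (norm_nonneg _) (hb _ _ _))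
      · push Not at hl
        let s0 : Fin (m+1) → Fin (m+1) := fun x => ⟨J x, by have := hl x; omega⟩
        have hs0 : Function.Injective s0 := fun x y hxy => hJ (by
          simpa [s0, Fin.ext_iff] using hxy)
        let s : Equiv.Perm (Fin (m+1)) := Equiv.ofBijective s0 (Finite.injective_iff_bijective.mp hs0)
        have hJs : ∀ p, ‖((Q p).submatrix J c).det‖ = ‖((Q p).submatrix c c).det‖ := by
          intro p
          have : (Q p).submatrix J c = ((Q p).submatrix c c).submatrix s id := rfl
          rw [this, Matrix.det_permute, norm_mul]
          rcases Int.units_eq_one_or (Equiv.Perm.sign s) with h | h <;> simp [h]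
        have := hcr.pow 2
        simp only [ne_eq, OfNat.ofNat_ne_zero, not_false_eq_true, zero_pow, mul_pow] at this
        simpa only [hJs] using this
    · have : ∀ p, ((Q p).submatrix J c).det = 0 := by
        intro p
        simp only [Function.Injective, not_forall] at hJ
        obtain ⟨x, y, hxy, hne⟩ := hJ
        exact Matrix.det_zero_of_row_eq hne (by ext j; simp [hxy])
      simp [this]
  have hfac : ((m+1).factorial : ℝ) ≠ 0 := by exact_mod_cast Nat.factorial_ne_zero _
  have h2 : Tendsto (fun p => ‖Q p j i‖ ^ 2) atTop (𝓝 0) := by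
    have := hfin.div_const ((m+1).factorial : ℝ)
    simpa [hfac] using this
  have := h2.sqrt
  simpa [Real.sqrt_sq] using this

lemma unitary_row {d : ℕ} (Q : Matrix (Fin d) (Fin d) ℂ) (hQ : Q ∈ Matrix.unitaryGroup (Fin d) ℂ)
    (j : Fin d) : ∑ i, ‖Q j i‖ ^ 2 = 1 := by
  have h := congrFun (congrFun (Matrix.mem_unitaryGroup_iff.mp hQ) j) j
  simp only [Matrix.mul_apply, Matrix.star_apply, Matrix.one_apply_eq, RCLike.star_def,
    Complex.mul_conj'] at h
  exact_mod_cast h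

lemma unitary_col {d : ℕ} (Q : Matrix (Fin d) (Fin d) ℂ) (hQ : Q ∈ Matrix.unitaryGroup (Fin d) ℂ)
    (i : Fin d) : ∑ j, ‖Q j i‖ ^ 2 = 1 := by
  have h := congrFun (congrFun (Matrix.mem_unitaryGroup_iff'.mp hQ) i) i
  simp only [Matrix.mul_apply, Matrix.star_apply, Matrix.one_apply_eq, RCLike.star_def,
    Complex.conj_mul'] at h
  exact_mod_cast h

lemma swap_sum {d : ℕ} (Q : Matrix (Fin d) (Fin d) ℂ) (hQ : Q ∈ Matrix.unitaryGroup (Fin d) ℂ)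
    (S : Finset (Fin d)) :
    ∑ j ∈ S, ∑ i ∈ Sᶜ, ‖Q j i‖ ^ 2 = ∑ i ∈ S, ∑ j ∈ Sᶜ, ‖Q j i‖ ^ 2 := by
  have h1 : ∑ j ∈ S, ∑ i, ‖Q j i‖ ^ 2 = ∑ i ∈ S, ∑ j, ‖Q j i‖ ^ 2 := by
    simp [unitary_row Q hQ, unitary_col Q hQ]
  simp only [← Finset.sum_add_sum_compl S, Finset.sum_add_distrib] at h1
  rw [Finset.sum_comm] at h1
  linarith

lemma upper_tendsto_zero {d m : ℕ} (Q : ℝ → Matrix (Fin d) (Fin d) ℂ)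
    (hQ : ∀ p, Q p ∈ Matrix.unitaryGroup (Fin d) ℂ)
    (h : ∀ j i : Fin d, m < (j : ℕ) → (i : ℕ) ≤ m → Tendsto (fun p => ‖Q p j i‖) atTop (𝓝 0))
    (j i : Fin d) (hj : (j : ℕ) ≤ m) (hi : m < (i : ℕ)) :
    Tendsto (fun p => ‖Q p j i‖) atTop (𝓝 0) := by
  let S : Finset (Fin d) := Finset.univ.filter fun x => (x : ℕ) ≤ m
  have hS : Tendsto (fun p => ∑ i ∈ S, ∑ j ∈ Sᶜ, ‖Q p j i‖ ^ 2) atTop (𝓝 0) := by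
    rw [← Finset.sum_const_zero (s := S)]
    refine tendsto_finsetSum _ fun x hx => ?_
    rw [← Finset.sum_const_zero (s := Sᶜ)]
    refine tendsto_finsetSum _ fun y hy => ?_
    simp [S] at hx hy
    simpa using (h y x hy hx).pow 2
  have h2 : Tendsto (fun p => ‖Q p j i‖ ^ 2) atTop (𝓝 0) := by
    refine squeeze_zero (fun p => by positivity) (fun p => ?_) hS
    rw [← swap_sum (Q p) (hQ p) S]
    have hjS : j ∈ S := by simp [S, hj]
    have hiS : i ∈ Sᶜ := by simp [S, hi]
    calc _ ≤ ∑ i ∈ Sᶜ, ‖Q p j i‖ ^ 2 :=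
          Finset.single_le_sum (f := fun i => ‖Q p j i‖ ^ 2) (fun _ _ => by positivity) hiS
      _ ≤ _ := Finset.single_le_sum (f := fun j => ∑ i ∈ Sᶜ, ‖Q p j i‖ ^ 2)
          (fun _ _ => by positivity) hjS
  have := h2.sqrt
  simpa [Real.sqrt_sq] using this

lemma conj_tendsto {d : ℕ} (Q : ℝ → Matrix (Fin d) (Fin d) ℂ)
    (hQ : ∀ p, Q p ∈ Matrix.unitaryGroup (Fin d) ℂ) (L : ℝ → Fin d → ℝ) (t : Fin d → ℝ)
    (hL : ∀ i, Tendsto (fun p => L p i) atTop (𝓝 (t i)))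
    (h : ∀ i j, i ≠ j → t i ≠ 0 → Tendsto (fun p => ‖Q p j i‖) atTop (𝓝 0)) :
    Tendsto (fun p => Q p * Matrix.diagonal (fun i => (L p i : ℂ)) * (Q p)ᴴ) atTop
      (𝓝 (Matrix.diagonal (fun i => (t i : ℂ)))) := by
  have hb : ∀ p x y, ‖Q p x y‖ ≤ 1 := fun p x y => entry_norm_bound_of_unitary (hQ p) x y
  have F1 : ∀ i j, i ≠ j → Tendsto (fun p => |L p i| * ‖Q p j i‖) atTop (𝓝 0) := by
    intro i j hij
    by_cases hz : t i = 0
    · have h1 := (hL i).abs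
      rw [hz, abs_zero] at h1
      exact squeeze_zero (fun p => by positivity)
        (fun p => mul_le_of_le_one_right (abs_nonneg _) (hb _ _ _)) h1
    · simpa using (hL i).abs.mul (h i j hij hz)
  have F2 : ∀ i, Tendsto (fun p => L p i * ‖Q p i i‖ ^ 2) atTop (𝓝 (t i)) := by
    intro i
    have e : ∀ p, L p i * ‖Q p i i‖ ^ 2 =
        L p i - ∑ j ∈ Finset.univ.erase i, L p i * ‖Q p j i‖ ^ 2 := by
      intro p
      have h1 := unitary_col (Q p) (hQ p) i
      rw [← Finset.add_sum_erase _ _ (Finset.mem_univ i)] at h1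
      rw [← Finset.mul_sum]
      linear_combination L p i * h1
    simp_rw [e]
    have h0 : Tendsto (fun p => ∑ j ∈ Finset.univ.erase i, L p i * ‖Q p j i‖ ^ 2) atTop (𝓝 0) := by
      rw [← Finset.sum_const_zero (s := Finset.univ.erase i)]
      refine tendsto_finsetSum _ fun j hj => ?_
      refine squeeze_zero_norm (fun p => ?_) (F1 i j (Finset.ne_of_mem_erase hj).symm)
      rw [norm_mul, Real.norm_eq_abs, norm_pow, norm_norm]
      refine mul_le_mul_of_nonneg_left ?_ (abs_nonneg _)
      exact pow_le_of_le_one (norm_nonneg _) (hb _ _ _) two_ne_zero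
    simpa using (hL i).sub h0
  refine tendsto_pi_nhds.mpr fun j => tendsto_pi_nhds.mpr fun l => ?_
  have e : ∀ p, (Q p * Matrix.diagonal (fun i => (L p i : ℂ)) * (Q p)ᴴ) j l =
      ∑ i, Q p j i * L p i * star (Q p l i) := by
    intro p
    rw [Matrix.mul_apply]
    simp [Matrix.mul_diagonal]
  have e2 : Matrix.diagonal (fun i => (t i : ℂ)) j l =
      ∑ i, if i = j ∧ i = l then (t i : ℂ) else 0 := by
    by_cases hjl : j = l
    · subst hjl; simp
    · rw [Matrix.diagonal_apply_ne _ hjl, Finset.sum_eq_zero]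
      intro i _
      rw [if_neg]; rintro ⟨rfl, rfl⟩; exact hjl rfl
  simp_rw [e]
  rw [e2]
  refine tendsto_finsetSum _ fun i _ => ?_
  by_cases hi : i = j ∧ i = l
  · obtain ⟨rfl, rfl⟩ := hi
    simp only [and_self, if_true]
    have := (Complex.continuous_ofReal.tendsto _).comp (F2 i)
    refine this.congr fun p => ?_
    simp only [Function.comp]
    push_cast
    rw [← Complex.mul_conj']
    simp only [RCLike.star_def]
    ring
  · rw [if_neg hi]
    by_cases hij : i = j
    · have hil : i ≠ l := fun h => hi ⟨hij, h⟩
      refine squeeze_zero_norm (fun p => ?_) (F1 i l hil)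
      rw [norm_mul, norm_mul, norm_star, Complex.norm_real, Real.norm_eq_abs]
      exact mul_le_mul_of_nonneg_right
        (mul_le_of_le_one_left (abs_nonneg _) (hb _ _ _)) (norm_nonneg _)
    · refine squeeze_zero_norm (fun p => ?_) (F1 i j hij)
      rw [norm_mul, norm_mul, norm_star, Complex.norm_real, Real.norm_eq_abs, mul_comm ‖Q p j i‖]
      exact mul_le_of_le_one_right (by positivity) (hb _ _ _)

/-- If the eigenvalues of `A` are all distinct and the limiting eigenvalues satisfy
`λ_i = a_i b_i` for all `i`, then
`lim_{p→∞} (A^{p/2} B^p A^{p/2})^{1/p} = V diag(a_1 b_1, …, a_d b_d) V*`. -/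
theorem anti_lie_trotter_maximal_case_distinct_eigenvalues
    {d : ℕ} (A B V W : Matrix (Fin d) (Fin d) ℂ) (a b : Fin d → ℝ)
    (hA : A.PosSemidef) (hB : B.PosSemidef)
    (hV : V ∈ Matrix.unitaryGroup (Fin d) ℂ)
    (hW : W ∈ Matrix.unitaryGroup (Fin d) ℂ)
    (ha : StrictAnti a) (hb : Antitone b)
    (ha0 : ∀ i, 0 ≤ a i) (hb0 : ∀ i, 0 ≤ b i)
    (hAd : A = V * Matrix.diagonal (fun i => (a i : ℂ)) * Vᴴ)
    (hBd : B = W * Matrix.diagonal (fun i => (b i : ℂ)) * Wᴴ)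
    (lam : Fin d → ℝ)
    (hlam : ∀ i, Tendsto (fun p : ℝ => eigsDesc (Zmat A B p) i) atTop (𝓝 (lam i)))
    (hmax : ∀ i, lam i = a i * b i) :
    Tendsto (fun p : ℝ => Zmat A B p) atTop
      (𝓝 (V * Matrix.diagonal (fun i => ((a i * b i : ℝ) : ℂ)) * Vᴴ)) := by
  have hU : Vᴴ * W ∈ Matrix.unitaryGroup (Fin d) ℂ := mul_mem (Unitary.star_mem hV) hW
  have hex : ∀ p : ℝ, ∃ Q ∈ Matrix.unitaryGroup (Fin d) ℂ, 0 < p →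
      (∀ i, 0 ≤ eigsDesc (Zmat A B p) i) ∧
      Zmat A B p = V * (Q * Matrix.diagonal (fun i => (eigsDesc (Zmat A B p) i : ℂ)) * Qᴴ) * Vᴴ ∧
      Matrix.diagonal (fun i => ((a i ^ (p / 2) : ℝ) : ℂ)) *
        ((Vᴴ * W) * Matrix.diagonal (fun i => (((b i ^ (p / 2)) ^ 2 : ℝ) : ℂ)) * (Vᴴ * W)ᴴ) *
        Matrix.diagonal (fun i => ((a i ^ (p / 2) : ℝ) : ℂ)) =
      Q * Matrix.diagonal (fun i => (((eigsDesc (Zmat A B p) i ^ (p / 2)) ^ 2 : ℝ) : ℂ)) * Qᴴ := by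
    intro p
    by_cases hp : 0 < p
    · obtain ⟨Q, hQ, h⟩ := setup_at V W a b hV hW ha0 hb0 (Zmat A B p) p hp (by rw [hAd, hBd])
      exact ⟨Q, hQ, fun _ => h⟩
    · exact ⟨1, one_mem _, fun h => absurd h hp⟩
  choose Q hQ hprop using hex
  have hL : ∀ i, Tendsto (fun p : ℝ => eigsDesc (Zmat A B p) i) atTop (𝓝 (a i * b i)) := by
    intro i; rw [← hmax i]; exact hlam i
  have hlow : ∀ m (hk : m + 1 ≤ d), 0 < a ⟨m, hk⟩ * b ⟨m, hk⟩ → ∀ j i : Fin d, m < (j : ℕ) →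
      (i : ℕ) ≤ m → Tendsto (fun p => ‖Q p j i‖) atTop (𝓝 0) := by
    intro m hk hpos j i hj hi
    refine lower_tendsto_zero hk Q hQ (fun J hJ l hl => ?_) j i hj hi
    exact det_tendsto_zero hk (Vᴴ * W) hU Q hQ a b ha hb ha0 hb0
      (fun p i => eigsDesc (Zmat A B p) i) (fun p hp => (hprop p hp).1) hL
      (fun p hp => (hprop p hp).2.2) hpos J hJ l hl
  have hoff : ∀ i j, i ≠ j → a i * b i ≠ 0 → Tendsto (fun p => ‖Q p j i‖) atTop (𝓝 0) := by
    intro i j hij hne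
    have hpos : 0 < a i * b i := lt_of_le_of_ne (mul_nonneg (ha0 i) (hb0 i)) hne.symm
    rcases lt_or_gt_of_ne hij with hlt | hlt
    · exact hlow i i.2 hpos j i hlt le_rfl
    · have hposj : 0 < a j * b j :=
        hpos.trans_le (mul_le_mul (ha.antitone hlt.le) (hb hlt.le) (hb0 i) (ha0 j))
      exact upper_tendsto_zero Q hQ (hlow j j.2 hposj) j i le_rfl hlt
  have hmain := conj_tendsto Q hQ (fun p i => eigsDesc (Zmat A B p) i) (fun i => a i * b i) hL hoff
  have hconj := (hmain.const_mul V).mul_const Vᴴ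
  refine hconj.congr' ?_
  filter_upwards [eventually_gt_atTop 0] with p hp
  exact (hprop p hp).2.1.symm
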